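/- Under the standing assumption, for every E ∈ ℝ the operator (E − V_1) + i·1 is invertible and the Prüfer phase at N = 1 equals the Cayley transform U_1^E = ((E − V_1) − i·1)((E − V_1) + i·1)⁻¹; moreover, for every real E > 4Λ one has ‖U_1^E − (1 − 2i/E)·1‖ ≤ 8Λ/E². -/

import Mathlib

open ContinuousLinearMap

noncomputable section

variable {H : Type*} [NormedAddCommGroup H] [InnerProductSpace ℂ H] [CompleteSpace H]

/-- The Hilbert space `K = H ⊕ H` (with the `ℓ²` product norm). -/
abbrev Kspace (H : Type*) [NormedAddCommGroup H] [InnerProductSpace ℂ H] : Type _ :=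
  WithLp 2 (H × H)

/-- The block operator `[[A,B],[C,D]]` on `K`, acting by `(x,y) ↦ (Ax + By, Cx + Dy)`. -/
def blockOp (A B C D : H →L[ℂ] H) : Kspace H →L[ℂ] Kspace H :=
  (((WithLp.prodContinuousLinearEquiv 2 ℂ H H).symm : (H × H) →L[ℂ] Kspace H)) ∘L
    (((A ∘L ContinuousLinearMap.fst ℂ H H) + (B ∘L ContinuousLinearMap.snd ℂ H H)).prod
      ((C ∘L ContinuousLinearMap.fst ℂ H H) + (D ∘L ContinuousLinearMap.snd ℂ H H))) ∘L
    (((WithLp.prodContinuousLinearEquiv 2 ℂ H H) : Kspace H →L[ℂ] H × H))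

/-- Upper-left block of an operator on `K`. -/
def blkA (M : Kspace H →L[ℂ] Kspace H) : H →L[ℂ] H :=
  ContinuousLinearMap.fst ℂ H H ∘L
    ((WithLp.prodContinuousLinearEquiv 2 ℂ H H) : Kspace H →L[ℂ] H × H) ∘L M ∘L
    ((WithLp.prodContinuousLinearEquiv 2 ℂ H H).symm : (H × H) →L[ℂ] Kspace H) ∘L
    ContinuousLinearMap.inl ℂ H H

/-- Upper-right block of an operator on `K`. -/
def blkB (M : Kspace H →L[ℂ] Kspace H) : H →L[ℂ] H :=
  ContinuousLinearMap.fst ℂ H H ∘L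
    ((WithLp.prodContinuousLinearEquiv 2 ℂ H H) : Kspace H →L[ℂ] H × H) ∘L M ∘L
    ((WithLp.prodContinuousLinearEquiv 2 ℂ H H).symm : (H × H) →L[ℂ] Kspace H) ∘L
    ContinuousLinearMap.inr ℂ H H

/-- Lower-left block of an operator on `K`. -/
def blkC (M : Kspace H →L[ℂ] Kspace H) : H →L[ℂ] H :=
  ContinuousLinearMap.snd ℂ H H ∘L
    ((WithLp.prodContinuousLinearEquiv 2 ℂ H H) : Kspace H →L[ℂ] H × H) ∘L M ∘L
    ((WithLp.prodContinuousLinearEquiv 2 ℂ H H).symm : (H × H) →L[ℂ] Kspace H) ∘L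
    ContinuousLinearMap.inl ℂ H H

/-- Lower-right block of an operator on `K`. -/
def blkD (M : Kspace H →L[ℂ] Kspace H) : H →L[ℂ] H :=
  ContinuousLinearMap.snd ℂ H H ∘L
    ((WithLp.prodContinuousLinearEquiv 2 ℂ H H) : Kspace H →L[ℂ] H × H) ∘L M ∘L
    ((WithLp.prodContinuousLinearEquiv 2 ℂ H H).symm : (H × H) →L[ℂ] Kspace H) ∘L
    ContinuousLinearMap.inr ℂ H H

/-- The Cayley transform `C = (1/√2)[[1, -i],[1, i]]`. -/
def Cayley (H : Type*) [NormedAddCommGroup H] [InnerProductSpace ℂ H] [CompleteSpace H] :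
    Kspace H →L[ℂ] Kspace H :=
  blockOp (((Real.sqrt 2 : ℂ)⁻¹) • 1) ((-((Real.sqrt 2 : ℂ)⁻¹ * Complex.I)) • 1)
    (((Real.sqrt 2 : ℂ)⁻¹) • 1) ((((Real.sqrt 2 : ℂ)⁻¹ * Complex.I)) • 1)

/-- The transfer operator `M^E = [[(E − V)T⁻¹, −T*],[T⁻¹, 0]]`, where the inverse `T⁻¹`
is given as the operator `Tinv`. -/
def transferOp (E : ℝ) (V T Tinv : H →L[ℂ] H) : Kspace H →L[ℂ] Kspace H :=
  blockOp ((((E : ℂ) • (1 : H →L[ℂ] H)) - V) ∘L Tinv) (-(adjoint T)) Tinv 0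

/-- The product of transfer operators `M_N^E ⋯ M_1^E` (empty product for `N = 0`). -/
def transferProd (V T Tinv : ℕ → H →L[ℂ] H) (E : ℝ) : ℕ → (Kspace H →L[ℂ] Kspace H)
  | 0 => 1
  | n + 1 => transferOp E (V (n + 1)) (T (n + 1)) (Tinv (n + 1)) ∘L transferProd V T Tinv E n

/-- `a_N^E`: the upper-left block of `M_N^E ⋯ M_1^E`, so that
`(a_N^E x, b_N^E x) = M_N^E ⋯ M_1^E (x, 0)`. -/
def pruferA (V T Tinv : ℕ → H →L[ℂ] H) (N : ℕ) (E : ℝ) : H →L[ℂ] H :=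
  blkA (transferProd V T Tinv E N)

/-- `b_N^E`: the lower-left block of `M_N^E ⋯ M_1^E`. -/
def pruferB (V T Tinv : ℕ → H →L[ℂ] H) (N : ℕ) (E : ℝ) : H →L[ℂ] H :=
  blkC (transferProd V T Tinv E N)

/-- The Prüfer phase `U_N^E = (a_N^E − i b_N^E)(a_N^E + i b_N^E)⁻¹`. -/
def pruferU (V T Tinv : ℕ → H →L[ℂ] H) (N : ℕ) (E : ℝ) : H →L[ℂ] H :=
  (pruferA V T Tinv N E - Complex.I • pruferB V T Tinv N E) *
    Ring.inverse (pruferA V T Tinv N E + Complex.I • pruferB V T Tinv N E)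

theorem pruferA_one_aux (V T Tinv : ℕ → H →L[ℂ] H) (hTinv1 : Tinv 1 = 1) (E : ℝ) :
    pruferA V T Tinv 1 E = (E : ℂ) • (1 : H →L[ℂ] H) - V 1 := by
  ext x
  simp [pruferA, blkA, transferProd, transferOp, blockOp, hTinv1]

theorem pruferB_one_aux (V T Tinv : ℕ → H →L[ℂ] H) (hTinv1 : Tinv 1 = 1) (E : ℝ) :
    pruferB V T Tinv 1 E = 1 := by
  ext x
  simp [pruferB, blkC, transferProd, transferOp, blockOp, hTinv1]

theorem isUnit_aux (V : H →L[ℂ] H) (hV : IsSelfAdjoint V) (E : ℝ) :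
    IsUnit (((E : ℂ) • (1 : H →L[ℂ] H) - V) + Complex.I • (1 : H →L[ℂ] H)) := by
  by_contra h
  have hm : ((E : ℂ) + Complex.I) ∈ spectrum ℂ V := by
    rw [spectrum.mem_iff]
    convert h using 2
    rw [Algebra.algebraMap_eq_smul_one, add_smul]
    abel
  have := congrArg Complex.im (hV.mem_spectrum_eq_re hm)
  simp at this

theorem norm_aux (V : H →L[ℂ] H) (Λ E : ℝ) (hV : ‖V‖ ≤ Λ) (h1 : ‖(1 : H →L[ℂ] H)‖ ≤ Λ)
    (hE : 4 * Λ < E)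
    (hu : IsUnit (((E : ℂ) • (1 : H →L[ℂ] H) - V) + Complex.I • (1 : H →L[ℂ] H))) :
    ‖(((E : ℂ) • (1 : H →L[ℂ] H) - V) - Complex.I • (1 : H →L[ℂ] H)) *
          Ring.inverse (((E : ℂ) • (1 : H →L[ℂ] H) - V) + Complex.I • (1 : H →L[ℂ] H)) -
        ((1 : ℂ) - 2 * Complex.I / (E : ℂ)) • (1 : H →L[ℂ] H)‖ ≤ 8 * Λ / E ^ 2 := by
  have hΛ : 0 ≤ Λ := (norm_nonneg _).trans hV
  have hE0 : 0 < E := by linarith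
  have hEc : (E : ℂ) ≠ 0 := by exact_mod_cast hE0.ne'
  set D := Ring.inverse (((E : ℂ) • (1 : H →L[ℂ] H) - V) + Complex.I • (1 : H →L[ℂ] H)) with hD
  have hBD : (((E : ℂ) • (1 : H →L[ℂ] H) - V) + Complex.I • (1 : H →L[ℂ] H)) * D = 1 :=
    Ring.mul_inverse_cancel _ hu
  set W := V - Complex.I • (1 : H →L[ℂ] H) with hW
  have hWn : ‖W‖ ≤ 2 * Λ := by
    calc ‖W‖ ≤ ‖V‖ + ‖Complex.I • (1 : H →L[ℂ] H)‖ := norm_sub_le _ _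
      _ ≤ 2 * Λ := by
        rw [norm_smul, Complex.norm_I]
        linarith
  have hED : (E : ℂ) • D = 1 + W * D := by
    rw [← hBD, hW]
    simp only [add_mul, sub_mul, smul_mul_assoc, one_mul]
    abel
  have hWD : ‖W * D‖ ≤ 2 * Λ * ‖D‖ :=
    (norm_mul_le _ _).trans (mul_le_mul_of_nonneg_right hWn (norm_nonneg _))
  have hone : ‖(1 : H →L[ℂ] H)‖ ≤ 1 := ContinuousLinearMap.norm_id_le
  have hDn : ‖D‖ * E ≤ 2 := by
    have h := norm_add_le (1 : H →L[ℂ] H) (W * D)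
    rw [← hED, norm_smul, Complex.norm_real, Real.norm_eq_abs, abs_of_pos hE0] at h
    have := mul_le_mul_of_nonneg_right hE.le (norm_nonneg D)
    linarith
  have key : (((E : ℂ) • (1 : H →L[ℂ] H) - V) - Complex.I • (1 : H →L[ℂ] H)) * D -
        ((1 : ℂ) - 2 * Complex.I / (E : ℂ)) • (1 : H →L[ℂ] H)
      = (-(2 * Complex.I / (E : ℂ))) • (W * D) := by
    have e1 : (((E : ℂ) • (1 : H →L[ℂ] H) - V) - Complex.I • (1 : H →L[ℂ] H)) * D
        = 1 - (2 * Complex.I) • D := by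
      have h := hBD
      simp only [add_mul, sub_mul, smul_mul_assoc, one_mul] at h ⊢
      rw [← h]
      module
    have e2 : W * D = (E : ℂ) • D - 1 := by rw [hED]; abel
    have e3 : (2 * Complex.I) • D = (2 * Complex.I / (E : ℂ)) • ((E : ℂ) • D) := by
      rw [smul_smul, div_mul_cancel₀ _ hEc]
    rw [e1, e2, e3]
    module
  rw [key, norm_smul, norm_neg, norm_div, norm_mul, Complex.norm_I, Complex.norm_real,
    Real.norm_eq_abs, abs_of_pos hE0]
  simp only [Complex.norm_ofNat, mul_one]
  rw [div_mul_eq_mul_div, div_le_div_iff₀ hE0 (by positivity)]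
  have h2 : ‖W * D‖ * E ≤ 4 * Λ := by
    have := mul_le_mul_of_nonneg_right hWD hE0.le
    have := mul_le_mul_of_nonneg_left hDn (by positivity : 0 ≤ 2 * Λ)
    linarith
  have := mul_le_mul_of_nonneg_right h2 hE0.le
  linarith

/-- Under the standing assumption, for every `E` the operator `(E − V₁) + i` is invertible
and the `N = 1` Prüfer phase is the Cayley transform
`U_1^E = ((E − V₁) − i)((E − V₁) + i)⁻¹`; moreover for every real `E > 4Λ` one has
`‖U_1^E − (1 − 2i/E)·1‖ ≤ 8Λ/E²`. -/
theorem pruferU_one (V T Tinv : ℕ → H →L[ℂ] H) (Λ : ℝ)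
    (hV : ∀ n, 1 ≤ n → IsSelfAdjoint (V n))
    (hT : ∀ n, 1 ≤ n → T n ∘L Tinv n = 1 ∧ Tinv n ∘L T n = 1)
    (hT1 : T 1 = 1) (hTinv1 : Tinv 1 = 1)
    (hΛ : ∀ n, 1 ≤ n → ‖T n‖ ≤ Λ ∧ ‖Tinv n‖ ≤ Λ ∧ ‖V n‖ ≤ Λ) :
    (∀ E : ℝ,
      IsUnit (((E : ℂ) • (1 : H →L[ℂ] H) - V 1) + Complex.I • (1 : H →L[ℂ] H)) ∧
      pruferU V T Tinv 1 E =
        (((E : ℂ) • (1 : H →L[ℂ] H) - V 1) - Complex.I • (1 : H →L[ℂ] H)) *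
          Ring.inverse (((E : ℂ) • (1 : H →L[ℂ] H) - V 1) +
            Complex.I • (1 : H →L[ℂ] H))) ∧
    ∀ E : ℝ, 4 * Λ < E →
      ‖pruferU V T Tinv 1 E -
        ((1 : ℂ) - 2 * Complex.I / (E : ℂ)) • (1 : H →L[ℂ] H)‖ ≤ 8 * Λ / E ^ 2 := by
  have hU : ∀ E : ℝ, pruferU V T Tinv 1 E =
        (((E : ℂ) • (1 : H →L[ℂ] H) - V 1) - Complex.I • (1 : H →L[ℂ] H)) *
          Ring.inverse (((E : ℂ) • (1 : H →L[ℂ] H) - V 1) +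
            Complex.I • (1 : H →L[ℂ] H)) := fun E => by
    rw [pruferU, pruferA_one_aux V T Tinv hTinv1, pruferB_one_aux V T Tinv hTinv1]
  refine ⟨fun E => ⟨isUnit_aux _ (hV 1 le_rfl) E, hU E⟩, fun E hE => ?_⟩
  rw [hU]
  exact norm_aux _ _ _ (hΛ 1 le_rfl).2.2 (hT1 ▸ (hΛ 1 le_rfl).1) hE (isUnit_aux _ (hV 1 le_rfl) E)
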